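/- arXiv:2205.04397 — 4 statements merged into one kernel-verified Lean document; each statement's English description precedes it below -/
import Mathlib

section
/- Let H and K be complex Hilbert spaces, B : H → H a bounded self-adjoint operator, and Π : K → H a bounded operator. Let z ∈ ℂ be such that 1 - z·B is invertible (hence so is 1 - z̄·B). Define S_w := (1 - w·B)⁻¹ ∘ Π and N(w) := w · Π* ∘ (1 - w·B)⁻¹ ∘ Π. Then (N(z))* = N(z̄), and the imaginary part of N(z) satisfies (1/(2i))·(N(z) - (N(z))*) = (Im z) · (S_{z̄})* ∘ S_{z̄}. -/
open ContinuousLinearMap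

/-- For bounded self-adjoint `B` on `H` and bounded `Π : K → H`, with
`S_w := (1 - wB)⁻¹ Π` and `N(w) := w Π*(1 - wB)⁻¹Π`, one has `(N(z))* = N(z̄)` and
`Im N(z) := (1/(2i))(N(z) - N(z)*) = (Im z) (S_{z̄})* S_{z̄}`. -/
theorem M_function_adjoint_and_imaginary_part
    {H K : Type*} [NormedAddCommGroup H] [InnerProductSpace ℂ H] [CompleteSpace H]
    [NormedAddCommGroup K] [InnerProductSpace ℂ K] [CompleteSpace K]
    (B : H →L[ℂ] H) (hB : IsSelfAdjoint B) (Pi : K →L[ℂ] H) (z : ℂ)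
    (hz : IsUnit (1 - z • B)) :
    adjoint (z • (adjoint Pi ∘L Ring.inverse (1 - z • B) ∘L Pi))
        = (starRingEnd ℂ z) •
            (adjoint Pi ∘L Ring.inverse (1 - (starRingEnd ℂ z) • B) ∘L Pi) ∧
    (1 / (2 * Complex.I)) •
        (z • (adjoint Pi ∘L Ring.inverse (1 - z • B) ∘L Pi)
          - adjoint (z • (adjoint Pi ∘L Ring.inverse (1 - z • B) ∘L Pi)))
      = (z.im : ℂ) •
          (adjoint (Ring.inverse (1 - (starRingEnd ℂ z) • B) ∘L Pi)
            ∘L (Ring.inverse (1 - (starRingEnd ℂ z) • B) ∘L Pi)) := by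
  have hstar : star (1 - z • B) = 1 - (starRingEnd ℂ z) • B := by
    rw [star_sub, star_one, star_smul, hB.star_eq]; rfl
  have hz' : IsUnit (1 - (starRingEnd ℂ z) • B) := hstar ▸ hz.star
  have hR : star (Ring.inverse (1 - z • B)) = Ring.inverse (1 - (starRingEnd ℂ z) • B) := by
    rw [← hstar, Ring.inverse_star]
  have h1 := Ring.inverse_mul_cancel _ hz
  have h2 := Ring.mul_inverse_cancel _ hz'
  generalize Ring.inverse (1 - z • B) = R at *
  generalize Ring.inverse (1 - (starRingEnd ℂ z) • B) = R' at *
  have hRa : adjoint R = R' := hR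
  have hRa' : adjoint R' = R := by rw [← hRa, adjoint_adjoint]
  have key : z • R - (starRingEnd ℂ z) • R' = (z - starRingEnd ℂ z) • (R * R') := by
    have e1 : z • R = z • (R * ((1 - (starRingEnd ℂ z) • B) * R')) := by rw [h2, mul_one]
    have e2 : (starRingEnd ℂ z) • R' = (starRingEnd ℂ z) • ((R * (1 - z • B)) * R') := by
      rw [h1, one_mul]
    rw [e1, e2]
    simp only [mul_sub, sub_mul, mul_one, one_mul, smul_mul_assoc, mul_smul_comm, smul_sub,
      sub_smul, smul_smul, mul_assoc, mul_comm z]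
    abel
  have hadj : adjoint (z • (adjoint Pi ∘L R ∘L Pi))
      = (starRingEnd ℂ z) • (adjoint Pi ∘L R' ∘L Pi) := by
    rw [map_smulₛₗ, adjoint_comp, adjoint_comp, adjoint_adjoint, hRa, comp_assoc]
  refine ⟨hadj, ?_⟩
  rw [hadj, adjoint_comp, hRa']
  have e : z • (adjoint Pi ∘L R ∘L Pi) - (starRingEnd ℂ z) • (adjoint Pi ∘L R' ∘L Pi)
      = adjoint Pi ∘L (z • R - (starRingEnd ℂ z) • R') ∘L Pi := by
    ext x; simp
  have hc : (1 / (2 * Complex.I)) * (z - starRingEnd ℂ z) = (z.im : ℂ) := by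
    rw [Complex.sub_conj]
    have := Complex.I_ne_zero
    push_cast
    field_simp
  rw [e, key, ← hc, mul_smul]
  congr 1
  ext x; simp
end

section
/- Let H and K be complex Hilbert spaces, B : H → H a bounded self-adjoint operator, Π : K → H a bounded operator, Λ : K → K a bounded self-adjoint operator, and P : K → K an orthogonal projection. Suppose c₀ > 0 satisfies ‖Π(Pφ)‖ ≥ c₀‖Pφ‖ for all φ ∈ K. Let z ∈ ℂ with Im z > 0 be such that 1 - z·B is invertible, and set M(z) := Λ + z·Π*(1 - z·B)⁻¹Π. Then there exists a bounded operator J : K → K with J = P ∘ J ∘ P, (P ∘ M(z) ∘ P) ∘ J = P, J ∘ (P ∘ M(z) ∘ P) = P, and ‖J‖ ≤ (1 + |z|‖B‖)² / ((Im z)·c₀²). -/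
open ContinuousLinearMap

/-- For `M(z) := Λ + z Π*(1 - zB)⁻¹Π` with `B`, `Λ` self-adjoint, `P` an
orthogonal projection, `‖Π(Pφ)‖ ≥ c₀‖Pφ‖` and `Im z > 0`, the compression `P M(z) P` is
invertible on the range of `P`: there is a bounded `J` with `J = PJP`,
`(PM(z)P)J = P = J(PM(z)P)` and `‖J‖ ≤ (1 + |z|‖B‖)²/((Im z)c₀²)`. -/
theorem compressed_M_function_invertible
    {H K : Type*} [NormedAddCommGroup H] [InnerProductSpace ℂ H] [CompleteSpace H]
    [NormedAddCommGroup K] [InnerProductSpace ℂ K] [CompleteSpace K]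
    (B : H →L[ℂ] H) (hB : IsSelfAdjoint B) (Pi : K →L[ℂ] H)
    (Λ : K →L[ℂ] K) (hΛ : IsSelfAdjoint Λ)
    (P : K →L[ℂ] K) (hP : IsSelfAdjoint P) (hP2 : P ∘L P = P)
    (c₀ : ℝ) (hc₀ : 0 < c₀) (hPi : ∀ φ : K, c₀ * ‖P φ‖ ≤ ‖Pi (P φ)‖)
    (z : ℂ) (hzim : 0 < z.im) (hz : IsUnit (1 - z • B)) :
    ∃ J : K →L[ℂ] K,
      J = P ∘L J ∘L P ∧
      (P ∘L (Λ + z • (adjoint Pi ∘L Ring.inverse (1 - z • B) ∘L Pi)) ∘L P) ∘L J = P ∧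
      J ∘L (P ∘L (Λ + z • (adjoint Pi ∘L Ring.inverse (1 - z • B) ∘L Pi)) ∘L P) = P ∧
      ‖J‖ ≤ (1 + ‖z‖ * ‖B‖) ^ 2 / (z.im * c₀ ^ 2) := by
  obtain ⟨R, hR⟩ : ∃ R, R = Ring.inverse (1 - z • B) := ⟨_, rfl⟩
  have hRy : ∀ y, (1 - z • B) (R y) = y := by
    intro y
    have := Ring.mul_inverse_cancel _ hz
    rw [← hR] at this
    exact congrArg (fun f : H →L[ℂ] H => f y) this
  rw [← hR]
  obtain ⟨M, hM⟩ : ∃ M, M = Λ + z • (adjoint Pi ∘L R ∘L Pi) := ⟨_, rfl⟩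
  rw [← hM]
  set D : ℝ := 1 + ‖z‖ * ‖B‖ with hD
  have hDpos : 0 < D := by positivity
  obtain ⟨κ, hκ⟩ : ∃ κ : ℝ, κ = z.im * c₀ ^ 2 / D ^ 2 := ⟨_, rfl⟩
  have hκpos : 0 < κ := by rw [hκ]; positivity
  have hPP : ∀ x, P (P x) = P x := fun x => congrArg (fun f : K →L[ℂ] K => f x) hP2
  have hPs : ∀ x y, inner ℂ (P x) y = inner ℂ x (P y) := fun x y => hP.isSymmetric x y
  -- imaginary part of the form of `M`
  have hMim : ∀ x, κ * ‖P x‖ ^ 2 ≤ (inner ℂ (P x) (M (P x))).im := by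
    intro x
    obtain ⟨w, hw⟩ : ∃ w, w = P x := ⟨_, rfl⟩
    have h0 := hPi x
    rw [← hw] at h0 ⊢
    obtain ⟨u, hu⟩ : ∃ u, u = R (Pi w) := ⟨_, rfl⟩
    have hy : u - z • B u = Pi w := by
      have := hRy (Pi w)
      rw [← hu] at this
      simpa using this
    have hΛim : (inner ℂ w (Λ w)).im = 0 := by
      have h1 := hΛ.isSymmetric w w
      have h2 := inner_conj_symm (𝕜 := ℂ) w (Λ w)
      have h3 : inner ℂ (Λ w) w = inner ℂ w (Λ w) := h1
      rw [h3] at h2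
      exact Complex.conj_eq_iff_im.1 h2
    have hBim : (inner ℂ (B u) u).im = 0 := by
      have h2 := inner_conj_symm (𝕜 := ℂ) u (B u)
      have h3 : inner ℂ (B u) u = inner ℂ u (B u) := hB.isSymmetric u u
      rw [← h3] at h2
      exact Complex.conj_eq_iff_im.1 h2
    have huu : inner ℂ u u = ((‖u‖ ^ 2 : ℝ) : ℂ) := by
      rw [inner_self_eq_norm_sq_to_K]; simp
    have hval : (inner ℂ w (M w)).im = z.im * ‖u‖ ^ 2 := by
      have e : inner ℂ w (M w) = inner ℂ w (Λ w) + z * inner ℂ (Pi w) u := by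
        rw [hM]
        simp [inner_add_right, inner_smul_right, adjoint_inner_right, hu]
      rw [e, ← hy, inner_sub_left, inner_smul_left, huu]
      simp only [Complex.add_im, Complex.mul_im, Complex.sub_im, Complex.sub_re, Complex.mul_re,
        Complex.ofReal_re, Complex.ofReal_im, Complex.conj_re, Complex.conj_im, hBim, hΛim]
      ring
    have hn : ‖Pi w‖ ≤ D * ‖u‖ := by
      rw [← hy]
      calc ‖u - z • B u‖ ≤ ‖u‖ + ‖z • B u‖ := norm_sub_le _ _
        _ ≤ ‖u‖ + ‖z‖ * (‖B‖ * ‖u‖) := by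
          rw [norm_smul]; gcongr; exact B.le_opNorm u
        _ = D * ‖u‖ := by rw [hD]; ring
    have hsq : (c₀ * ‖w‖) ^ 2 ≤ (D * ‖u‖) ^ 2 :=
      pow_le_pow_left₀ (by positivity) (h0.trans hn) 2
    rw [hval, hκ, div_mul_eq_mul_div, div_le_iff₀ (by positivity)]
    nlinarith
  -- the extended operator
  obtain ⟨T, hT⟩ : ∃ T : K →L[ℂ] K,
      T = P ∘L M ∘L P + (Complex.I * (κ : ℂ)) • (1 - P) := ⟨_, rfl⟩
  have hTx : ∀ x, T x = P (M (P x)) + (Complex.I * (κ : ℂ)) • (x - P x) := by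
    intro x; rw [hT]; simp
  have hTim : ∀ x, κ * ‖x‖ ^ 2 ≤ (inner ℂ x (T x)).im := by
    intro x
    have horth : inner ℂ (P x) (x - P x) = 0 := by
      rw [hPs, map_sub, hPP, sub_self, inner_zero_right]
    have hpyth : ‖x‖ ^ 2 = ‖P x‖ ^ 2 + ‖x - P x‖ ^ 2 := by
      have := norm_add_sq_eq_norm_sq_add_norm_sq_of_inner_eq_zero (𝕜 := ℂ) (P x) (x - P x) horth
      rw [add_sub_cancel] at this
      nlinarith
    have hq : inner ℂ x (x - P x) = ((‖x - P x‖ ^ 2 : ℝ) : ℂ) := by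
      have : inner ℂ x (x - P x) = inner ℂ (x - P x) (x - P x) := by
        rw [inner_sub_left x (P x), horth, sub_zero]
      rw [this, inner_self_eq_norm_sq_to_K]; simp
    have := hMim x
    rw [hTx, inner_add_right, inner_smul_right, hq, ← hPs, hpyth]
    simp only [Complex.add_im, Complex.mul_im, Complex.mul_re, Complex.I_re, Complex.I_im,
      Complex.ofReal_re, Complex.ofReal_im]
    nlinarith
  have hlow : ∀ x, κ * ‖x‖ ^ 2 ≤ ‖inner ℂ x (T x)‖ := fun x =>
    (hTim x).trans ((le_abs_self _).trans (Complex.abs_im_le_norm _))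
  have hbelow : ∀ x, κ * ‖x‖ ≤ ‖T x‖ := by
    intro x
    rcases (norm_nonneg x).eq_or_lt with h | h
    · rw [← h]; simp
    · have := (hlow x).trans (norm_inner_le_norm (𝕜 := ℂ) x (T x))
      nlinarith
  have hTu : IsUnit T := by
    refine ContinuousLinearMap.isUnit_of_forall_le_norm_inner_map T (c := ⟨κ, hκpos.le⟩) hκpos ?_
    intro x
    rw [norm_inner_symm, mul_comm]
    exact hlow x
  obtain ⟨S, hS⟩ : ∃ S, S = Ring.inverse T := ⟨_, rfl⟩
  have hTS : T * S = 1 := by rw [hS]; exact Ring.mul_inverse_cancel _ hTu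
  have hST : S * T = 1 := by rw [hS]; exact Ring.inverse_mul_cancel _ hTu
  have hTP : T * P = P ∘L M ∘L P := by
    ext x; simp [hTx, hPP]
  have hPT : P * T = P ∘L M ∘L P := by
    ext x; simp [hTx, hPP]
  have hPPm : P * P = P := hP2
  have hcomm : P * S = S * P := by
    calc P * S = S * T * P * S := by rw [hST, one_mul]
      _ = S * (T * P) * S := by simp only [mul_assoc]
      _ = S * P * (T * S) := by rw [hTP, ← hPT]; simp only [mul_assoc]
      _ = S * P := by rw [hTS, mul_one]
  have hPn : ∀ x, ‖P x‖ ≤ ‖x‖ := by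
    intro x
    have h1 : ‖P x‖ ^ 2 ≤ ‖x‖ * ‖P x‖ := by
      have h2 := norm_inner_le_norm (𝕜 := ℂ) x (P x)
      rw [← hPP x, ← hPs, inner_self_eq_norm_sq_to_K, hPP] at h2
      simpa using h2
    rcases (norm_nonneg (P x)).eq_or_lt with h | h
    · rw [← h]; exact norm_nonneg x
    · nlinarith
  refine ⟨S * P, ?_, ?_, ?_, ?_⟩
  · change S * P = P * (S * P * P)
    rw [mul_assoc S, hPPm, ← mul_assoc, hcomm, mul_assoc, hPPm]
  · rw [← hPT]
    change P * T * (S * P) = P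
    rw [mul_assoc, ← mul_assoc T, hTS, one_mul, hPPm]
  · rw [← hPT]
    change S * P * (P * T) = P
    rw [← mul_assoc, mul_assoc S, hPPm, mul_assoc, hPT, ← hTP, ← mul_assoc, hST, one_mul]
  · refine ContinuousLinearMap.opNorm_le_bound _ (by positivity) ?_
    intro x
    have h1 := hbelow (S (P x))
    have h2 : T (S (P x)) = P x := congrArg (fun f : K →L[ℂ] K => f (P x)) hTS
    rw [h2] at h1
    have h3 := h1.trans (hPn x)
    have h4 : D ^ 2 / (z.im * c₀ ^ 2) = κ⁻¹ := by rw [hκ, inv_div]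
    rw [h4, inv_mul_eq_div, le_div_iff₀ hκpos, mul_comm]
    exact h3
end

section
/- Let H₁ and H₂ be complex Hilbert spaces, and let A : H₁ → H₁, B : H₂ → H₁, E : H₁ → H₂, D : H₂ → H₂ be bounded operators. Let K ≥ 1 and ε > 0 satisfy: A is invertible with ‖A⁻¹‖ ≤ K, ‖B‖ ≤ K, ‖E‖ ≤ K, D is invertible with ‖D⁻¹‖ ≤ ε, and ε·K³ ≤ 1/2. Then the block operator T : H₁ × H₂ → H₁ × H₂, T(x₁,x₂) = (A x₁ + B x₂, E x₁ + D x₂), is invertible, and ‖T⁻¹ - T₀‖ ≤ 2ε(1 + K²)², where T₀ is the block operator with (1,1)-entry A⁻¹ and all other entries zero, i.e. T₀(x₁,x₂) = (A⁻¹x₁, 0). -/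
open ContinuousLinearMap

/-- The block operator `(x₁, x₂) ↦ (A x₁ + B x₂, E x₁ + D x₂)` on the Hilbert direct sum
`H₁ ⊕ H₂`, realised as `WithLp 2 (H₁ × H₂)`. -/
noncomputable def blockOp {H₁ H₂ : Type*}
    [NormedAddCommGroup H₁] [InnerProductSpace ℂ H₁]
    [NormedAddCommGroup H₂] [InnerProductSpace ℂ H₂]
    (A : H₁ →L[ℂ] H₁) (B : H₂ →L[ℂ] H₁) (E : H₁ →L[ℂ] H₂) (D : H₂ →L[ℂ] H₂) :
    WithLp 2 (H₁ × H₂) →L[ℂ] WithLp 2 (H₁ × H₂) :=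
  ((WithLp.prodContinuousLinearEquiv 2 ℂ H₁ H₂).symm :
      H₁ × H₂ →L[ℂ] WithLp 2 (H₁ × H₂)) ∘L
    ((A ∘L ContinuousLinearMap.fst ℂ H₁ H₂ + B ∘L ContinuousLinearMap.snd ℂ H₁ H₂).prod
      (E ∘L ContinuousLinearMap.fst ℂ H₁ H₂ + D ∘L ContinuousLinearMap.snd ℂ H₁ H₂)) ∘L
    ((WithLp.prodContinuousLinearEquiv 2 ℂ H₁ H₂) :
      WithLp 2 (H₁ × H₂) →L[ℂ] H₁ × H₂)

theorem blockOp_apply_fst {H₁ H₂ : Type*}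
    [NormedAddCommGroup H₁] [InnerProductSpace ℂ H₁]
    [NormedAddCommGroup H₂] [InnerProductSpace ℂ H₂]
    (A : H₁ →L[ℂ] H₁) (B : H₂ →L[ℂ] H₁) (E : H₁ →L[ℂ] H₂) (D : H₂ →L[ℂ] H₂)
    (x : WithLp 2 (H₁ × H₂)) : (blockOp A B E D x).fst = A x.fst + B x.snd := rfl

theorem blockOp_apply_snd {H₁ H₂ : Type*}
    [NormedAddCommGroup H₁] [InnerProductSpace ℂ H₁]
    [NormedAddCommGroup H₂] [InnerProductSpace ℂ H₂]
    (A : H₁ →L[ℂ] H₁) (B : H₂ →L[ℂ] H₁) (E : H₁ →L[ℂ] H₂) (D : H₂ →L[ℂ] H₂)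
    (x : WithLp 2 (H₁ × H₂)) : (blockOp A B E D x).snd = E x.fst + D x.snd := rfl

theorem withLp_prod_ext {H₁ H₂ : Type*} {x y : WithLp 2 (H₁ × H₂)}
    (h1 : x.fst = y.fst) (h2 : x.snd = y.snd) : x = y :=
  WithLp.ofLp_injective 2 (Prod.ext h1 h2)

theorem withLp_norm_le {H₁ H₂ : Type*}
    [NormedAddCommGroup H₁] [NormedAddCommGroup H₂]
    (x : WithLp 2 (H₁ × H₂)) : ‖x‖ ≤ ‖x.fst‖ + ‖x.snd‖ := by
  have h := WithLp.prod_norm_sq_eq_of_L2 x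
  have h1 := norm_nonneg x.fst
  have h2 := norm_nonneg x.snd
  refine abs_le_of_sq_le_sq' ?_ (by positivity) |>.2
  nlinarith [mul_nonneg h1 h2]

theorem withLp_fst_le {H₁ H₂ : Type*}
    [NormedAddCommGroup H₁] [NormedAddCommGroup H₂]
    (x : WithLp 2 (H₁ × H₂)) : ‖x.fst‖ ≤ ‖x‖ := by
  have h := WithLp.prod_norm_sq_eq_of_L2 x
  refine abs_le_of_sq_le_sq' ?_ (by positivity) |>.2
  nlinarith [sq_nonneg ‖x.snd‖]

theorem withLp_snd_le {H₁ H₂ : Type*}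
    [NormedAddCommGroup H₁] [NormedAddCommGroup H₂]
    (x : WithLp 2 (H₁ × H₂)) : ‖x.snd‖ ≤ ‖x‖ := by
  have h := WithLp.prod_norm_sq_eq_of_L2 x
  refine abs_le_of_sq_le_sq' ?_ (by positivity) |>.2
  nlinarith [sq_nonneg ‖x.fst‖]

/-- Quantitative Schur-complement inversion: if `‖A⁻¹‖, ‖B‖, ‖E‖ ≤ k`,
`‖D⁻¹‖ ≤ ε` and `ε k³ ≤ 1/2`, then the block operator `T = [[A, B], [E, D]]` is invertible
and `‖T⁻¹ - [[A⁻¹, 0], [0, 0]]‖ ≤ 2ε(1 + k²)²`. -/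
theorem schur_quantitative_inversion {H₁ H₂ : Type*}
    [NormedAddCommGroup H₁] [InnerProductSpace ℂ H₁] [CompleteSpace H₁]
    [NormedAddCommGroup H₂] [InnerProductSpace ℂ H₂] [CompleteSpace H₂]
    (A : H₁ →L[ℂ] H₁) (B : H₂ →L[ℂ] H₁) (E : H₁ →L[ℂ] H₂) (D : H₂ →L[ℂ] H₂)
    (k ε : ℝ) (hk : 1 ≤ k) (hε : 0 < ε)
    (hA : IsUnit A) (hAinv : ‖(Ring.inverse A : H₁ →L[ℂ] H₁)‖ ≤ k)
    (hB : ‖B‖ ≤ k) (hE : ‖E‖ ≤ k)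
    (hD : IsUnit D) (hDinv : ‖(Ring.inverse D : H₂ →L[ℂ] H₂)‖ ≤ ε)
    (hsmall : ε * k ^ 3 ≤ 1 / 2) :
    IsUnit (blockOp A B E D) ∧
    ‖Ring.inverse (blockOp A B E D) - blockOp (Ring.inverse A) 0 0 0‖
      ≤ 2 * ε * (1 + k ^ 2) ^ 2 := by
  obtain ⟨uA, rfl⟩ := hA
  obtain ⟨uD, rfl⟩ := hD
  rw [Ring.inverse_unit] at hAinv hDinv ⊢
  have hAa : ∀ x, (uA : H₁ →L[ℂ] H₁) ((↑uA⁻¹ : H₁ →L[ℂ] H₁) x) = x := fun x =>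
    congrArg (fun f : H₁ →L[ℂ] H₁ => f x) uA.mul_inv
  have haA : ∀ x, (↑uA⁻¹ : H₁ →L[ℂ] H₁) ((uA : H₁ →L[ℂ] H₁) x) = x := fun x =>
    congrArg (fun f : H₁ →L[ℂ] H₁ => f x) uA.inv_mul
  have hdD : ∀ x, (↑uD⁻¹ : H₂ →L[ℂ] H₂) ((uD : H₂ →L[ℂ] H₂) x) = x := fun x =>
    congrArg (fun f : H₂ →L[ℂ] H₂ => f x) uD.inv_mul
  have hDd : (uD : H₂ →L[ℂ] H₂) * (↑uD⁻¹ : H₂ →L[ℂ] H₂) = 1 := uD.mul_inv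
  have hDu : IsUnit (uD : H₂ →L[ℂ] H₂) := uD.isUnit
  generalize (↑uA⁻¹ : H₁ →L[ℂ] H₁) = a at *
  generalize (↑uD⁻¹ : H₂ →L[ℂ] H₂) = d at *
  generalize (↑uA : H₁ →L[ℂ] H₁) = A at *
  generalize (↑uD : H₂ →L[ℂ] H₂) = D at *
  have hk0 : 0 ≤ k := by linarith
  have haB : ∀ y, ‖a (B y)‖ ≤ k ^ 2 * ‖y‖ := fun y => by
    calc ‖a (B y)‖ ≤ k * (k * ‖y‖) :=
          a.le_of_opNorm_le_of_le hAinv (B.le_of_opNorm_le hB y)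
      _ = _ := by ring
  have hEa : ∀ y, ‖E (a y)‖ ≤ k ^ 2 * ‖y‖ := fun y => by
    calc ‖E (a y)‖ ≤ k * (k * ‖y‖) :=
          E.le_of_opNorm_le_of_le hE (a.le_of_opNorm_le hAinv y)
      _ = _ := by ring
  have hQ : ∀ y, ‖d (E (a (B y)))‖ ≤ 1 / 2 * ‖y‖ := fun y => by
    calc ‖d (E (a (B y)))‖ ≤ ε * (k * (k ^ 2 * ‖y‖)) :=
          d.le_of_opNorm_le_of_le hDinv (E.le_of_opNorm_le_of_le hE (haB y))
      _ = ε * k ^ 3 * ‖y‖ := by ring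
      _ ≤ _ := by gcongr
  have hQn : ‖d ∘L E ∘L a ∘L B‖ < 1 :=
    (ContinuousLinearMap.opNorm_le_bound _ (by norm_num) hQ).trans_lt (by norm_num)
  have hS : IsUnit (D - E ∘L a ∘L B) := by
    have h1 : D - E ∘L a ∘L B = D * (1 - d ∘L E ∘L a ∘L B) := by
      rw [mul_sub, mul_one]
      congr 1
      change _ = (D * d) ∘L (E ∘L a ∘L B)
      rw [hDd]; rfl
    rw [h1]
    exact hDu.mul (isUnit_one_sub_of_norm_lt_one hQn)
  obtain ⟨uS, hS⟩ := hS
  have hSR : ∀ y, D ((↑uS⁻¹ : H₂ →L[ℂ] H₂) y) - E (a (B ((↑uS⁻¹ : H₂ →L[ℂ] H₂) y))) = y :=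
    fun y => by
      have := congrArg (fun f : H₂ →L[ℂ] H₂ => f y) uS.mul_inv
      rw [hS] at this
      exact this
  have hRS : ∀ y, (↑uS⁻¹ : H₂ →L[ℂ] H₂) (D y) - (↑uS⁻¹ : H₂ →L[ℂ] H₂) (E (a (B y))) = y :=
    fun y => by
      have := congrArg (fun f : H₂ →L[ℂ] H₂ => f y) uS.inv_mul
      rw [hS] at this
      rw [← map_sub]
      exact this
  generalize (↑uS⁻¹ : H₂ →L[ℂ] H₂) = R at *
  have hR : ∀ y, ‖R y‖ ≤ 2 * ε * ‖y‖ := fun y => by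
    have h1 : R y = d y + d (E (a (B (R y)))) := by
      rw [← map_add]
      conv_rhs => rw [← hSR y]
      rw [hSR y]
      rw [← hdD (R y)]
      congr 1
      rw [hdD]
      exact sub_eq_iff_eq_add.mp (hSR y)
    have h2 : ‖R y‖ ≤ ε * ‖y‖ + 1 / 2 * ‖R y‖ := by
      calc ‖R y‖ = ‖d y + d (E (a (B (R y))))‖ := by rw [← h1]
        _ ≤ _ := (norm_add_le _ _).trans (add_le_add (d.le_of_opNorm_le hDinv y) (hQ _))
    linarith
  let N := blockOp (a + a ∘L B ∘L R ∘L E ∘L a) (-(a ∘L B ∘L R)) (-(R ∘L E ∘L a)) R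
  have hTN : blockOp A B E D * N = 1 := by
    ext1 x
    apply withLp_prod_ext
    · change (blockOp A B E D (N x)).fst = x.fst
      simp [N, blockOp_apply_fst, blockOp_apply_snd, hAa]
      abel
    · change (blockOp A B E D (N x)).snd = x.snd
      have h1 := hSR x.snd
      have h2 := hSR (E (a x.fst))
      simp only [N, blockOp_apply_fst, blockOp_apply_snd, add_apply, neg_apply, comp_apply,
        map_add, map_neg]
      rw [sub_eq_iff_eq_add] at h1 h2
      rw [h1, h2]
      abel
  have hNT : N * blockOp A B E D = 1 := by
    ext1 x
    have h1 := hRS x.snd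
    rw [sub_eq_iff_eq_add] at h1
    apply withLp_prod_ext
    · change (N (blockOp A B E D x)).fst = x.fst
      simp only [N, blockOp_apply_fst, blockOp_apply_snd, add_apply, neg_apply, comp_apply,
        map_add, map_neg, haA, h1]
      abel
    · change (N (blockOp A B E D x)).snd = x.snd
      simp only [N, blockOp_apply_fst, blockOp_apply_snd, add_apply, neg_apply, comp_apply,
        map_add, map_neg, haA, h1]
      abel
  let U : (WithLp 2 (H₁ × H₂) →L[ℂ] WithLp 2 (H₁ × H₂))ˣ := ⟨blockOp A B E D, N, hTN, hNT⟩
  have hinv : Ring.inverse (blockOp A B E D) = N := Ring.inverse_unit U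
  refine ⟨U.isUnit, ?_⟩
  rw [hinv]
  refine ContinuousLinearMap.opNorm_le_bound _ (by positivity) fun x => ?_
  have hf : ((N - blockOp a 0 0 0 : WithLp 2 (H₁ × H₂) →L[ℂ] WithLp 2 (H₁ × H₂)) x).fst = a (B (R (E (a x.fst) - x.snd))) := by
    change (N x).fst - (blockOp a 0 0 0 x).fst = _
    simp only [N, blockOp_apply_fst, add_apply, neg_apply, comp_apply, map_sub, zero_apply]
    abel
  have hs : ((N - blockOp a 0 0 0 : WithLp 2 (H₁ × H₂) →L[ℂ] WithLp 2 (H₁ × H₂)) x).snd = -R (E (a x.fst) - x.snd) := by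
    change (N x).snd - (blockOp a 0 0 0 x).snd = _
    simp only [N, blockOp_apply_snd, neg_apply, comp_apply, map_sub, zero_apply]
    abel
  have hw : ‖E (a x.fst) - x.snd‖ ≤ (1 + k ^ 2) * ‖x‖ := by
    calc _ ≤ k ^ 2 * ‖x.fst‖ + ‖x.snd‖ := (norm_sub_le _ _).trans (by gcongr; exact hEa _)
      _ ≤ k ^ 2 * ‖x‖ + ‖x‖ := by
        gcongr
        · exact withLp_fst_le x
        · exact withLp_snd_le x
      _ = _ := by ring
  refine (withLp_norm_le _).trans ?_
  rw [hf, hs, norm_neg]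
  calc _ ≤ k ^ 2 * ‖R (E (a x.fst) - x.snd)‖ + ‖R (E (a x.fst) - x.snd)‖ := by
        gcongr; exact haB _
    _ = (1 + k ^ 2) * ‖R (E (a x.fst) - x.snd)‖ := by ring
    _ ≤ (1 + k ^ 2) * (2 * ε * ((1 + k ^ 2) * ‖x‖)) := by
        gcongr
        exact (hR _).trans (by gcongr)
    _ = _ := by ring
end

section
/- Let H₀, H₁, H₂ be complex Hilbert spaces and set K := H₁ × H₂ with the direct-sum Hilbert structure. Let R₀ : H₀ → H₀ and S, S' : K → H₀ be bounded operators with ‖S‖ ≤ s and ‖S'‖ ≤ s. Let A : H₁ → H₁, B : H₂ → H₁, E : H₁ → H₂, D : H₂ → H₂ be bounded, with A invertible, ‖A⁻¹‖ ≤ K₀, ‖B‖ ≤ K₀, ‖E‖ ≤ K₀ (K₀ ≥ 1), D invertible with ‖D⁻¹‖ ≤ ε, and ε·K₀³ ≤ 1/2; let T be the block operator T(x₁,x₂) = (Ax₁+Bx₂, Ex₁+Dx₂) (invertible by the Schur complement argument) and T₀ the block operator (x₁,x₂) ↦ (A⁻¹x₁, 0). Then ‖(R₀ - S∘T⁻¹∘(S')*)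 - (R₀ - S∘T₀∘(S')*)‖ ≤ 2·s²·ε·(1 + K₀²)². -/
open ContinuousLinearMap

/-- Abstract core of the Kreĭn-formula resolvent estimate: replacing the
inverse of the block operator `T = [[A, B], [E, D]]` by `T₀ = [[A⁻¹, 0], [0, 0]]` in
`R₀ - S T⁻¹ (S')*` produces an error at most `2 s² ε (1 + K₀²)²`. -/
theorem krein_resolvent_estimate {H₀ H₁ H₂ : Type*}
    [NormedAddCommGroup H₀] [InnerProductSpace ℂ H₀] [CompleteSpace H₀]
    [NormedAddCommGroup H₁] [InnerProductSpace ℂ H₁] [CompleteSpace H₁]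
    [NormedAddCommGroup H₂] [InnerProductSpace ℂ H₂] [CompleteSpace H₂]
    (R₀ : H₀ →L[ℂ] H₀) (S S' : WithLp 2 (H₁ × H₂) →L[ℂ] H₀) (s : ℝ)
    (hS : ‖S‖ ≤ s) (hS' : ‖S'‖ ≤ s)
    (A : H₁ →L[ℂ] H₁) (B : H₂ →L[ℂ] H₁) (E : H₁ →L[ℂ] H₂) (D : H₂ →L[ℂ] H₂)
    (K₀ ε : ℝ) (hK₀ : 1 ≤ K₀) (hε : 0 < ε)
    (hA : IsUnit A) (hAinv : ‖(Ring.inverse A : H₁ →L[ℂ] H₁)‖ ≤ K₀)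
    (hB : ‖B‖ ≤ K₀) (hE : ‖E‖ ≤ K₀)
    (hD : IsUnit D) (hDinv : ‖(Ring.inverse D : H₂ →L[ℂ] H₂)‖ ≤ ε)
    (hsmall : ε * K₀ ^ 3 ≤ 1 / 2) :
    IsUnit (blockOp A B E D) ∧
    ‖(R₀ - S ∘L Ring.inverse (blockOp A B E D) ∘L adjoint S')
        - (R₀ - S ∘L blockOp (Ring.inverse A) 0 0 0 ∘L adjoint S')‖
      ≤ 2 * s ^ 2 * ε * (1 + K₀ ^ 2) ^ 2 := by
  have ha1 : ∀ x, A (Ring.inverse A x) = x := fun x => by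
    have := Ring.mul_inverse_cancel A hA
    exact DFunLike.congr_fun this x
  have ha2 : ∀ x, Ring.inverse A (A x) = x := fun x => by
    have := Ring.inverse_mul_cancel A hA
    exact DFunLike.congr_fun this x
  have hd1 := Ring.mul_inverse_cancel D hD
  have hd2 := Ring.inverse_mul_cancel D hD
  generalize Ring.inverse A = a at *
  generalize Ring.inverse D = d at *
  have hK : 0 ≤ K₀ := by linarith
  have hs : 0 ≤ s := (norm_nonneg S).trans hS
  have haB : ‖a ∘L B‖ ≤ K₀ ^ 2 := by
    calc ‖a ∘L B‖ ≤ ‖a‖ * ‖B‖ := opNorm_comp_le _ _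
      _ ≤ K₀ * K₀ := by gcongr
      _ = K₀ ^ 2 := by ring
  have hEa : ‖E ∘L a‖ ≤ K₀ ^ 2 := by
    calc ‖E ∘L a‖ ≤ ‖E‖ * ‖a‖ := opNorm_comp_le _ _
      _ ≤ K₀ * K₀ := by gcongr
      _ = K₀ ^ 2 := by ring
  obtain ⟨X, hXdef⟩ : ∃ X : H₂ →L[ℂ] H₂, X = d ∘L (E ∘L (a ∘L B)) := ⟨_, rfl⟩
  have hX : ‖X‖ ≤ 1 / 2 := by
    calc ‖X‖ ≤ ‖d‖ * (‖E‖ * ‖a ∘L B‖) := by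
          rw [hXdef]
          refine (opNorm_comp_le _ _).trans ?_
          gcongr
          exact opNorm_comp_le _ _
      _ ≤ ε * (K₀ * K₀ ^ 2) := by gcongr
      _ = ε * K₀ ^ 3 := by ring
      _ ≤ 1 / 2 := hsmall
  have hu : IsUnit (D * (1 - X)) :=
    hD.mul (isUnit_one_sub_of_norm_lt_one (by linarith))
  obtain ⟨Q, hQ1, hQ2⟩ : ∃ Q : H₂ →L[ℂ] H₂, D * (1 - X) * Q = 1 ∧ Q * (D * (1 - X)) = 1 :=
    ⟨_, Ring.mul_inverse_cancel _ hu, Ring.inverse_mul_cancel _ hu⟩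
  have hQn : ‖Q‖ ≤ 2 * ε := by
    have h1 : Q = d + X * Q := by
      have h2 : d * (D * (1 - X) * Q) = d := by rw [hQ1, mul_one]
      have h3 : d * (D * (1 - X) * Q) = (d * D) * ((1 - X) * Q) := by simp only [mul_assoc]
      rw [h3, hd2, one_mul, sub_mul, one_mul] at h2
      rw [← h2]; abel
    have h2 : ‖Q‖ ≤ ε + 1 / 2 * ‖Q‖ := by
      calc ‖Q‖ = ‖d + X * Q‖ := by rw [← h1]
        _ ≤ ‖d‖ + ‖X * Q‖ := norm_add_le _ _
        _ ≤ ‖d‖ + ‖X‖ * ‖Q‖ := by gcongr; exact norm_mul_le _ _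
        _ ≤ ε + 1 / 2 * ‖Q‖ := by gcongr
    linarith
  have hSig : D * (1 - X) = D - E ∘L (a ∘L B) := by
    rw [mul_sub, mul_one, hXdef]
    congr 1
    change (D * d) ∘L _ = _
    rw [hd1]; rfl
  rw [hSig] at hQ1 hQ2
  have hq1 : ∀ y, D (Q y) - E (a (B (Q y))) = y := fun y => DFunLike.congr_fun hQ1 y
  have hq2 : ∀ y, Q (D y - E (a (B y))) = y := fun y => DFunLike.congr_fun hQ2 y
  let e := WithLp.prodContinuousLinearEquiv 2 ℂ H₁ H₂
  let U : H₂ →L[ℂ] WithLp 2 (H₁ × H₂) :=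
    (e.symm : H₁ × H₂ →L[ℂ] WithLp 2 (H₁ × H₂)) ∘L
      ((-(a ∘L B)).prod (ContinuousLinearMap.id ℂ H₂))
  let V : WithLp 2 (H₁ × H₂) →L[ℂ] H₂ :=
    (ContinuousLinearMap.snd ℂ H₁ H₂ - (E ∘L a) ∘L ContinuousLinearMap.fst ℂ H₁ H₂) ∘L
      (e : WithLp 2 (H₁ × H₂) →L[ℂ] H₁ × H₂)
  have hV : ‖V‖ ≤ 1 + K₀ ^ 2 := by
    refine opNorm_le_bound _ (by positivity) fun x => ?_
    have hx1 : ‖x.fst‖ ≤ ‖x‖ := WithLp.norm_fst_le _ x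
    have hx2 : ‖x.snd‖ ≤ ‖x‖ := WithLp.norm_snd_le _ x
    change ‖x.snd - (E ∘L a) x.fst‖ ≤ _
    calc ‖x.snd - (E ∘L a) x.fst‖ ≤ ‖x.snd‖ + ‖(E ∘L a) x.fst‖ := norm_sub_le _ _
      _ ≤ ‖x‖ + K₀ ^ 2 * ‖x‖ := by
          gcongr
          exact (le_opNorm _ _).trans (by gcongr)
      _ = _ := by ring
  have hU : ‖U‖ ≤ 1 + K₀ ^ 2 := by
    refine opNorm_le_bound _ (by positivity) fun y => ?_
    have h1 : U y = WithLp.toLp 2 (-(a ∘L B) y, 0) + WithLp.toLp 2 (0, y) := by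
      rw [← WithLp.toLp_add]
      simp [U, e]
    rw [h1]
    refine (norm_add_le _ _).trans ?_
    rw [WithLp.norm_toLp_fst, WithLp.norm_toLp_snd, norm_neg]
    have := (a ∘L B).le_opNorm y
    nlinarith [norm_nonneg y]
  let W := blockOp a 0 0 0 + U ∘L Q ∘L V
  have hW1 : blockOp A B E D * W = 1 := by
    ext x : 1
    have h := hq1 (x.snd - E (a x.fst))
    apply WithLp.ofLp_injective
    ext
    · simp [W, U, V, e, blockOp, ha1]
      abel
    · simp [W, U, V, e, blockOp]
      simp only [map_sub] at h
      rw [← sub_eq_zero] at h ⊢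
      rw [← h]; abel
  have hW2 : W * blockOp A B E D = 1 := by
    ext x : 1
    have h := hq2 x.snd
    have h' : Q (E x.fst + D x.snd - E (a (A x.fst + B x.snd))) = x.snd := by
      rw [← h]; congr 1; rw [h, map_add, map_add, ha2]; abel
    apply WithLp.ofLp_injective
    ext
    · simp only [W, U, V, e, blockOp]
      simp only [map_sub, map_add, ha2] at h'
      simp [ha2]
      have h2 := congrArg (fun y => a (B y)) h'
      simp only [map_sub, map_add] at h2
      rw [← sub_eq_zero] at h2 ⊢
      rw [← neg_eq_zero, ← h2]; abel
    · simp only [W, U, V, e, blockOp]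
      simp only [map_sub, map_add, ha2] at h'
      simp [ha2]
      rw [← sub_eq_zero] at h' ⊢
      rw [← h']; abel
  have hT : IsUnit (blockOp A B E D) := ⟨⟨_, W, hW1, hW2⟩, rfl⟩
  refine ⟨hT, ?_⟩
  have hinv : Ring.inverse (blockOp A B E D) = W := by
    have := Ring.inverse_unit (⟨_, W, hW1, hW2⟩ : (WithLp 2 (H₁ × H₂) →L[ℂ] WithLp 2 (H₁ × H₂))ˣ)
    exact this
  rw [hinv]
  have hdiff : (R₀ - S ∘L W ∘L adjoint S') - (R₀ - S ∘L blockOp a 0 0 0 ∘L adjoint S')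
      = -(S ∘L (U ∘L Q ∘L V) ∘L adjoint S') := by
    simp only [W, add_comp, comp_add]; abel
  rw [hdiff, norm_neg]
  have hS'' : ‖adjoint S'‖ ≤ s := by rwa [LinearIsometryEquiv.norm_map]
  calc ‖S ∘L (U ∘L Q ∘L V) ∘L adjoint S'‖
      ≤ ‖S‖ * ((‖U‖ * (‖Q‖ * ‖V‖)) * ‖adjoint S'‖) := by
        refine (opNorm_comp_le _ _).trans ?_
        gcongr
        refine (opNorm_comp_le _ _).trans ?_
        gcongr
        refine (opNorm_comp_le _ _).trans ?_
        gcongr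
        exact opNorm_comp_le _ _
    _ ≤ s * (((1 + K₀ ^ 2) * ((2 * ε) * (1 + K₀ ^ 2))) * s) := by gcongr
    _ = _ := by ring
end
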